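/- Under the hypotheses of the previous statement, for every integer m ≥ 2 and all x, b ∈ (0,∞)ⁿ with x ≤ b componentwise, F^{m*}(x) > (r(b))^m F₁^{m*}(x₁) F₂^{m*}(x₂). -/

import Mathlib

open MeasureTheory Filter Set

/-- Update one coordinate of a point of `(0,∞)^k × (0,∞)^l`, coordinates
indexed by `Fin k ⊕ Fin l`. -/
def updCoord {k l : ℕ} (x : (Fin k → ℝ) × (Fin l → ℝ)) :
    Fin k ⊕ Fin l → ℝ → (Fin k → ℝ) × (Fin l → ℝ)
  | Sum.inl i, t => (Function.update x.1 i t, x.2)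
  | Sum.inr j, t => (x.1, Function.update x.2 j t)

/-- The value of one coordinate. -/
def coordVal {k l : ℕ} (x : (Fin k → ℝ) × (Fin l → ℝ)) : Fin k ⊕ Fin l → ℝ
  | Sum.inl i => x.1 i
  | Sum.inr j => x.2 j

open scoped ENNReal

set_option linter.unusedSectionVars false

section Generic

variable {E : Type*} [AddCommGroup E] [PartialOrder E] [IsOrderedAddMonoid E]
  [TopologicalSpace E] [OrderClosedTopology E] [MeasurableSpace E] [OpensMeasurableSpace E]
  [MeasurableAdd₂ E] [MeasurableSub₂ E]

/-- `(n+1)`-fold convolution power. -/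
noncomputable def cpow {E : Type*} [AddCommGroup E] [MeasurableSpace E]
    (μ : Measure E) : ℕ → Measure E
  | 0 => μ
  | n + 1 => Measure.conv (cpow μ n) μ

instance cpow_finite (μ : Measure E) [IsFiniteMeasure μ] (n : ℕ) :
    IsFiniteMeasure (cpow μ n) := by
  induction n with
  | zero => exact ‹_›
  | succ n ih => rw [cpow]; infer_instance

lemma conv_Iic (ν μ : Measure E) [IsFiniteMeasure μ] [IsFiniteMeasure ν] (x : E) :
    (Measure.conv ν μ) (Iic x) = ∫⁻ y, ν (Iic (x - y)) ∂μ := by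
  rw [Measure.conv, Measure.map_apply (by fun_prop) measurableSet_Iic,
    Measure.prod_apply_symm (measurableSet_Iic.preimage (by fun_prop))]
  refine lintegral_congr fun y => ?_
  congr 1
  ext z
  simp [le_sub_iff_add_le]

lemma measurable_Iic_sub (ν : Measure E) [IsFiniteMeasure ν] (x : E) :
    Measurable fun y => ν (Iic (x - y)) := by
  have h : MeasurableSet {p : E × E | p.1 + p.2 ≤ x} :=
    (measurableSet_Iic (a := x)).preimage (measurable_fst.add measurable_snd)
  have := measurable_measure_prodMk_right (μ := ν) h
  convert this using 3 with y
  ext z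
  simp [le_sub_iff_add_le]

/-- swapping the two convolution factors -/
lemma lintegral_Iic_comm (ν μ : Measure E) [IsFiniteMeasure μ] [IsFiniteMeasure ν] (x : E) :
    ∫⁻ y, ν (Iic (x - y)) ∂μ = ∫⁻ z, μ (Iic (x - z)) ∂ν := by
  rw [← conv_Iic, ← conv_Iic, Measure.conv_comm]

lemma cpow_supp (μ : Measure E) [IsFiniteMeasure μ] {P : Set E} (hPm : MeasurableSet P)
    (hadd : ∀ a ∈ P, ∀ b ∈ P, a + b ∈ P) (h : ∀ᵐ y ∂μ, y ∈ P) (n : ℕ) :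
    ∀ᵐ y ∂(cpow μ n), y ∈ P := by
  induction n with
  | zero => exact h
  | succ n ih =>
    rw [cpow, Measure.conv]
    refine (ae_map_iff (p := fun y => y ∈ P) (by fun_prop) hPm).2 ?_
    have h1 := (Measure.quasiMeasurePreserving_fst (μ := cpow μ n) (ν := μ)).ae ih
    have h2 := (Measure.quasiMeasurePreserving_snd (μ := cpow μ n) (ν := μ)).ae h
    filter_upwards [h1, h2] with p hp1 hp2 using hadd _ hp1 _ hp2

lemma Iic_eq_zero (ν : Measure E) {P : Set E}
    (hup : ∀ a ∈ P, ∀ b, a ≤ b → b ∈ P) (h : ∀ᵐ y ∂ν, y ∈ P) {z : E} (hz : z ∉ P) :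
    ν (Iic z) = 0 :=
  measure_mono_null (fun y hy hyP => hz (hup y hyP z hy)) (ae_iff.1 h)

lemma dens_supp (vol : Measure E) (g : E → ℝ) (hgi : Integrable g vol) {P : Set E}
    (hg0 : ∀ y, y ∉ P → g y = 0) :
    ∀ᵐ y ∂(vol.withDensity fun y => ENNReal.ofReal (g y)), y ∈ P := by
  rw [ae_withDensity_iff' hgi.1.aemeasurable.ennreal_ofReal]
  refine Eventually.of_forall fun y hy => ?_
  by_contra hyP
  simp [hg0 y hyP] at hy

lemma ident (vol : Measure E) (g : E → ℝ) (hgn : ∀ y, 0 ≤ g y) (hgi : Integrable g vol)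
    {P : Set E} (hPm : MeasurableSet P)
    (hadd : ∀ a ∈ P, ∀ b ∈ P, a + b ∈ P) (hup : ∀ a ∈ P, ∀ b, a ≤ b → b ∈ P)
    (hP0 : ∀ a ∈ P, 0 ≤ a)
    (hg0 : ∀ y, y ∉ P → g y = 0)
    (G : ℕ → E → ℝ) (hG1 : ∀ x, G 1 x = ∫ y in P ∩ Iic x, g y ∂vol)
    (hGr : ∀ m, 1 ≤ m → ∀ x, G (m + 1) x = ∫ y in P ∩ Iic x, G m (x - y) * g y ∂vol)
    (n : ℕ) (x : E) :
    G (n + 1) x = (cpow (vol.withDensity fun y => ENNReal.ofReal (g y)) n).real (Iic x) := by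
  set μ := vol.withDensity fun y => ENNReal.ofReal (g y) with hμ
  have : IsFiniteMeasure μ := isFiniteMeasure_withDensity_ofReal hgi.2
  induction n generalizing x with
  | zero =>
    rw [hG1, cpow, measureReal_def, withDensity_apply _ measurableSet_Iic,
      ← ofReal_integral_eq_lintegral_ofReal hgi.restrict (Eventually.of_forall hgn),
      ENNReal.toReal_ofReal (integral_nonneg hgn), inter_comm, ← setIntegral_indicator hPm]
    congr 1
    ext y
    by_cases hy : y ∈ P <;> simp [hy, hg0]
  | succ n ih =>
    rw [hGr _ (by omega)]
    simp_rw [ih]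
    have hsupp := cpow_supp μ hPm hadd (dens_supp vol g hgi hg0) n
    rw [setIntegral_eq_integral_of_forall_compl_eq_zero]
    · rw [measureReal_def, cpow, conv_Iic, ← integral_toReal
        (measurable_Iic_sub _ x).aemeasurable (Eventually.of_forall fun y => measure_lt_top _ _)]
      conv_rhs => rw [hμ]
      rw [integral_withDensity_eq_integral_toReal_smul₀
        hgi.1.aemeasurable.ennreal_ofReal (Eventually.of_forall fun y => ENNReal.ofReal_lt_top)]
      refine integral_congr_ae (Eventually.of_forall fun y => ?_)
      simp only [ENNReal.toReal_ofReal (hgn y), smul_eq_mul, measureReal_def]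
      ring
    · intro y hy
      by_cases hyP : y ∈ P
      · have : x - y ∉ P := fun h => hy ⟨hyP, by simpa using hP0 _ h⟩
        rw [measureReal_def, Iic_eq_zero _ hup hsupp this]; simp
      · simp [hg0 y hyP]

end Generic

section Main

variable {A B : Type*}
  [AddCommGroup A] [PartialOrder A] [IsOrderedAddMonoid A]
  [TopologicalSpace A] [OrderClosedTopology A] [MeasurableSpace A] [OpensMeasurableSpace A]
  [MeasurableAdd₂ A] [MeasurableSub₂ A]
  [AddCommGroup B] [PartialOrder B] [IsOrderedAddMonoid B]
  [TopologicalSpace B] [OrderClosedTopology B] [MeasurableSpace B] [OpensMeasurableSpace B]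
  [MeasurableAdd₂ B] [MeasurableSub₂ B] [OpensMeasurableSpace (A × B)]
  [MeasurableAdd₂ (A × B)] [MeasurableSub₂ (A × B)]

lemma core (μ : Measure (A × B)) (μ₁ : Measure A) (μ₂ : Measure B)
    [IsFiniteMeasure μ] [IsFiniteMeasure μ₁] [IsFiniteMeasure μ₂]
    {P₁ : Set A} {P₂ : Set B} (hm₁ : MeasurableSet P₁) (hm₂ : MeasurableSet P₂)
    (hadd₁ : ∀ a ∈ P₁, ∀ b ∈ P₁, a + b ∈ P₁) (hup₁ : ∀ a ∈ P₁, ∀ b, a ≤ b → b ∈ P₁)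
    (h0₁ : ∀ a ∈ P₁, 0 ≤ a)
    (hadd₂ : ∀ a ∈ P₂, ∀ b ∈ P₂, a + b ∈ P₂) (hup₂ : ∀ a ∈ P₂, ∀ b, a ≤ b → b ∈ P₂)
    (h0₂ : ∀ a ∈ P₂, 0 ≤ a)
    (hs : ∀ᵐ y ∂μ, y ∈ P₁ ×ˢ P₂) (hs₁ : ∀ᵐ y ∂μ₁, y ∈ P₁) (hs₂ : ∀ᵐ y ∂μ₂, y ∈ P₂)
    (c : ℝ≥0∞) (hc : c ≠ ⊤) (b : A × B)
    (hweak : ∀ x ∈ P₁ ×ˢ P₂, x ≤ b → c * (μ₁ (Iic x.1) * μ₂ (Iic x.2)) ≤ μ (Iic x))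
    (hpos : ∀ x ∈ P₁ ×ˢ P₂, ∀ z ∈ P₁ ×ˢ P₂, z ≤ x →
      μ {y | x - y ∈ P₁ ×ˢ P₂ ∧ x - y ≤ z} ≠ 0)
    (hstrict : ∀ x ∈ P₁ ×ˢ P₂, x ≤ b → ∃ z₀ ∈ P₁ ×ˢ P₂, z₀ ≤ x ∧ ∀ z ∈ P₁ ×ˢ P₂, z ≤ z₀ →
      c * (μ₁ (Iic z.1) * μ₂ (Iic z.2)) < μ (Iic z)) (n : ℕ) :
    ∀ x ∈ P₁ ×ˢ P₂, x ≤ b →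
      c ^ (n + 2) * (cpow μ₁ (n + 1) (Iic x.1) * cpow μ₂ (n + 1) (Iic x.2))
        < cpow μ (n + 1) (Iic x) := by
  have hup : ∀ a ∈ P₁ ×ˢ P₂, ∀ b, a ≤ b → b ∈ P₁ ×ˢ P₂ := fun a ha b hab =>
    ⟨hup₁ _ ha.1 _ hab.1, hup₂ _ ha.2 _ hab.2⟩
  have hadd : ∀ a ∈ P₁ ×ˢ P₂, ∀ b ∈ P₁ ×ˢ P₂, a + b ∈ P₁ ×ˢ P₂ := fun a ha b hb =>
    ⟨hadd₁ _ ha.1 _ hb.1, hadd₂ _ ha.2 _ hb.2⟩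
  have h0 : ∀ a ∈ P₁ ×ˢ P₂, 0 ≤ a := fun a ha => ⟨h0₁ _ ha.1, h0₂ _ ha.2⟩
  have S₁ := cpow_supp μ₁ hm₁ hadd₁ hs₁
  have S₂ := cpow_supp μ₂ hm₂ hadd₂ hs₂
  have zero : ∀ n, ∀ z ∉ P₁ ×ˢ P₂, cpow μ₁ n (Iic z.1) * cpow μ₂ n (Iic z.2) = 0 := by
    intro n z hz
    by_cases h1 : z.1 ∈ P₁
    · have h2 : z.2 ∉ P₂ := fun h2 => hz ⟨h1, h2⟩
      rw [Iic_eq_zero _ hup₂ (S₂ n) h2, mul_zero]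
    · rw [Iic_eq_zero _ hup₁ (S₁ n) h1, zero_mul]
  -- the inductive step
  have step : ∀ n, (∀ x ∈ P₁ ×ˢ P₂, x ≤ b →
        c ^ (n + 1) * (cpow μ₁ n (Iic x.1) * cpow μ₂ n (Iic x.2)) ≤ cpow μ n (Iic x)) →
      (∀ x ∈ P₁ ×ˢ P₂, x ≤ b → ∃ z₀ ∈ P₁ ×ˢ P₂, z₀ ≤ x ∧ ∀ z ∈ P₁ ×ˢ P₂, z ≤ z₀ →
        c ^ (n + 1) * (cpow μ₁ n (Iic z.1) * cpow μ₂ n (Iic z.2)) < cpow μ n (Iic z)) →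
      ∀ x ∈ P₁ ×ˢ P₂, x ≤ b →
        c ^ (n + 2) * (cpow μ₁ (n + 1) (Iic x.1) * cpow μ₂ (n + 1) (Iic x.2))
          < cpow μ (n + 1) (Iic x) := by
    intro n hw hst x hx hxb
    obtain ⟨z₀, hz₀, hz₀x, hz⟩ := hst x hx hxb
    set ρ := (cpow μ₁ n).prod (cpow μ₂ n) with hρ
    have hρI : ∀ z : A × B, ρ (Iic z) = cpow μ₁ n (Iic z.1) * cpow μ₂ n (Iic z.2) := by
      intro z
      rw [hρ, ← Measure.prod_prod, Iic_prod_eq]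
    have hρs : ∀ᵐ z ∂ρ, z ∈ P₁ ×ˢ P₂ := by
      have h1 := (Measure.quasiMeasurePreserving_fst
        (μ := cpow μ₁ n) (ν := cpow μ₂ n)).ae (S₁ n)
      have h2 := (Measure.quasiMeasurePreserving_snd
        (μ := cpow μ₁ n) (ν := cpow μ₂ n)).ae (S₂ n)
      filter_upwards [h1, h2] with p hp1 hp2 using ⟨hp1, hp2⟩
    have e1 : c ^ (n + 1) * ∫⁻ y, ρ (Iic (x - y)) ∂μ < ∫⁻ y, cpow μ n (Iic (x - y)) ∂μ := by
      rw [← lintegral_const_mul _ (measurable_Iic_sub ρ x)]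
      refine lintegral_strict_mono_of_ae_le_of_ae_lt_on
        (measurable_Iic_sub _ x).aemeasurable ?_ ?_ (hpos x hx z₀ hz₀ hz₀x) ?_
      · rw [lintegral_const_mul _ (measurable_Iic_sub ρ x), ← conv_Iic]
        exact ENNReal.mul_ne_top (ENNReal.pow_ne_top hc) (measure_ne_top _ _)
      · filter_upwards [hs] with y hy
        by_cases hxy : x - y ∈ P₁ ×ˢ P₂
        · rw [hρI]
          exact hw _ hxy ((sub_le_self x (h0 y hy)).trans hxb)
        · rw [hρI, zero n _ hxy, mul_zero]; exact zero_le
      · refine Eventually.of_forall fun y hy => ?_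
        rw [hρI]
        exact hz _ hy.1 hy.2
    have e2 : c * (cpow μ₁ (n + 1) (Iic x.1) * cpow μ₂ (n + 1) (Iic x.2))
        ≤ ∫⁻ y, ρ (Iic (x - y)) ∂μ := by
      rw [lintegral_Iic_comm, cpow, cpow, conv_Iic, conv_Iic, lintegral_Iic_comm _ μ₁,
        lintegral_Iic_comm _ μ₂, ← lintegral_prod_mul
          (measurable_Iic_sub _ _).aemeasurable (measurable_Iic_sub _ _).aemeasurable,
        ← lintegral_const_mul' _ _ hc]
      refine lintegral_mono_ae ?_
      filter_upwards [hρs] with z hz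
      by_cases hxz : x - z ∈ P₁ ×ˢ P₂
      · exact hweak _ hxz ((sub_le_self x (h0 z hz)).trans hxb)
      · have := zero 0 _ hxz
        simp only [cpow, Prod.fst_sub, Prod.snd_sub] at this
        rw [this, mul_zero]; exact zero_le
    calc c ^ (n + 2) * (cpow μ₁ (n + 1) (Iic x.1) * cpow μ₂ (n + 1) (Iic x.2))
        = c ^ (n + 1) * (c * (cpow μ₁ (n + 1) (Iic x.1) * cpow μ₂ (n + 1) (Iic x.2))) := by
          ring
      _ ≤ c ^ (n + 1) * ∫⁻ y, ρ (Iic (x - y)) ∂μ := by gcongr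
      _ < ∫⁻ y, cpow μ n (Iic (x - y)) ∂μ := e1
      _ = cpow μ (n + 1) (Iic x) := by rw [cpow, conv_Iic]
  induction n with
  | zero =>
    refine step 0 ?_ ?_
    · simpa [cpow] using hweak
    · simpa only [cpow, zero_add, pow_one] using hstrict
  | succ n ih =>
    refine step (n + 1) (fun x hx hxb => (ih x hx hxb).le) fun x hx hxb =>
      ⟨x, hx, le_rfl, fun z hz hzx => ih z hz (hzx.trans hxb)⟩

end Main

set_option maxHeartbeats 2000000 in
theorem convolution_inequality_fixed_b
    (k l : ℕ)
    (f F : (Fin k → ℝ) × (Fin l → ℝ) → ℝ)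
    (f₁ : (Fin k → ℝ) → ℝ) (F₁ : (Fin k → ℝ) → ℝ)
    (f₂ : (Fin l → ℝ) → ℝ) (F₂ : (Fin l → ℝ) → ℝ)
    -- f is a probability density, positive exactly on the positive orthant
    (hfpos : ∀ y : (Fin k → ℝ) × (Fin l → ℝ),
      (∀ i, 0 < y.1 i) → (∀ j, 0 < y.2 j) → 0 < f y)
    (hfsupp : ∀ y : (Fin k → ℝ) × (Fin l → ℝ),
      ¬ ((∀ i, 0 < y.1 i) ∧ (∀ j, 0 < y.2 j)) → f y = 0)
    (hfint : ∫ y, f y = 1)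
    -- F is the cdf of f, and f₁, F₁, f₂, F₂ the marginal densities and cdfs
    (hF : ∀ x : (Fin k → ℝ) × (Fin l → ℝ),
      F x = ∫ y in {y : (Fin k → ℝ) × (Fin l → ℝ) |
              (∀ i, 0 < y.1 i ∧ y.1 i ≤ x.1 i) ∧ (∀ j, 0 < y.2 j ∧ y.2 j ≤ x.2 j)}, f y)
    (hf₁ : ∀ x₁ : Fin k → ℝ, f₁ x₁ = ∫ y₂ : Fin l → ℝ, f (x₁, y₂))
    (hf₂ : ∀ x₂ : Fin l → ℝ, f₂ x₂ = ∫ y₁ : Fin k → ℝ, f (y₁, x₂))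
    (hF₁ : ∀ x₁ : Fin k → ℝ,
      F₁ x₁ = ∫ z₁ in {z₁ : Fin k → ℝ | ∀ i, 0 < z₁ i ∧ z₁ i ≤ x₁ i}, f₁ z₁)
    (hF₂ : ∀ x₂ : Fin l → ℝ,
      F₂ x₂ = ∫ z₂ in {z₂ : Fin l → ℝ | ∀ j, 0 < z₂ j ∧ z₂ j ≤ x₂ j}, f₂ z₂)
    -- F is C² and strictly MTP₂ on the positive orthant
    (hC2 : ContDiffOn ℝ 2 F {x | (∀ i, 0 < x.1 i) ∧ (∀ j, 0 < x.2 j)})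
    (hMTP2 : ∀ x : (Fin k → ℝ) × (Fin l → ℝ),
      (∀ i, 0 < x.1 i) → (∀ j, 0 < x.2 j) →
      ∀ c d : Fin k ⊕ Fin l, c ≠ d →
      0 < deriv (fun s => deriv
            (fun t => Real.log (F (updCoord (updCoord x d s) c t)))
            (coordVal x c)) (coordVal x d))
    -- the ratio r is > 1 and coordinatewise decreasing on the positive orthant
    (hr1 : ∀ x : (Fin k → ℝ) × (Fin l → ℝ),
      (∀ i, 0 < x.1 i) → (∀ j, 0 < x.2 j) → 1 < F x / (F₁ x.1 * F₂ x.2))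
    (hrdec : ∀ x y : (Fin k → ℝ) × (Fin l → ℝ),
      (∀ i, 0 < x.1 i) → (∀ j, 0 < x.2 j) →
      (∀ i, x.1 i ≤ y.1 i) → (∀ j, x.2 j ≤ y.2 j) →
      F y / (F₁ y.1 * F₂ y.2) ≤ F x / (F₁ x.1 * F₂ x.2))
    -- the m-fold convolutions of F and of its marginals
    (Fc : ℕ → (Fin k → ℝ) × (Fin l → ℝ) → ℝ)
    (F₁c : ℕ → (Fin k → ℝ) → ℝ) (F₂c : ℕ → (Fin l → ℝ) → ℝ)
    (hFc1 : Fc 1 = F) (hF₁c1 : F₁c 1 = F₁) (hF₂c1 : F₂c 1 = F₂)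
    (hFcrec : ∀ m : ℕ, 1 ≤ m → ∀ x : (Fin k → ℝ) × (Fin l → ℝ),
      Fc (m + 1) x = ∫ y in {y : (Fin k → ℝ) × (Fin l → ℝ) |
          (∀ i, 0 < y.1 i ∧ y.1 i ≤ x.1 i) ∧ (∀ j, 0 < y.2 j ∧ y.2 j ≤ x.2 j)},
        Fc m (x - y) * f y)
    (hF₁crec : ∀ m : ℕ, 1 ≤ m → ∀ x₁ : Fin k → ℝ,
      F₁c (m + 1) x₁ = ∫ y₁ in {y₁ : Fin k → ℝ | ∀ i, 0 < y₁ i ∧ y₁ i ≤ x₁ i},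
        F₁c m (x₁ - y₁) * f₁ y₁)
    (hF₂crec : ∀ m : ℕ, 1 ≤ m → ∀ x₂ : Fin l → ℝ,
      F₂c (m + 1) x₂ = ∫ y₂ in {y₂ : Fin l → ℝ | ∀ j, 0 < y₂ j ∧ y₂ j ≤ x₂ j},
        F₂c m (x₂ - y₂) * f₂ y₂) :
    ∀ m : ℕ, 2 ≤ m → ∀ x b : (Fin k → ℝ) × (Fin l → ℝ),
      (∀ i, 0 < x.1 i) → (∀ j, 0 < x.2 j) →
      (∀ i, 0 < b.1 i) → (∀ j, 0 < b.2 j) →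
      (∀ i, x.1 i ≤ b.1 i) → (∀ j, x.2 j ≤ b.2 j) →
      Fc m x > (F b / (F₁ b.1 * F₂ b.2)) ^ m * (F₁c m x.1 * F₂c m x.2) := by
  classical
  set P₁ : Set (Fin k → ℝ) := {z | ∀ i, 0 < z i} with hP₁
  set P₂ : Set (Fin l → ℝ) := {z | ∀ i, 0 < z i} with hP₂
  have o₁ : IsOpen P₁ := by
    simp only [hP₁, setOf_forall]
    exact isOpen_iInter_of_finite fun i => isOpen_lt continuous_const (continuous_apply i)
  have o₂ : IsOpen P₂ := by
    simp only [hP₂, setOf_forall]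
    exact isOpen_iInter_of_finite fun i => isOpen_lt continuous_const (continuous_apply i)
  have hm₁ := o₁.measurableSet
  have hm₂ := o₂.measurableSet
  have hadd₁ : ∀ a ∈ P₁, ∀ b ∈ P₁, a + b ∈ P₁ := fun a ha b hb i => add_pos (ha i) (hb i)
  have hadd₂ : ∀ a ∈ P₂, ∀ b ∈ P₂, a + b ∈ P₂ := fun a ha b hb i => add_pos (ha i) (hb i)
  have hup₁ : ∀ a ∈ P₁, ∀ b, a ≤ b → b ∈ P₁ := fun a ha b hb i => (ha i).trans_le (hb i)
  have hup₂ : ∀ a ∈ P₂, ∀ b, a ≤ b → b ∈ P₂ := fun a ha b hb i => (ha i).trans_le (hb i)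
  have h0₁ : ∀ a ∈ P₁, 0 ≤ a := fun a ha i => (ha i).le
  have h0₂ : ∀ a ∈ P₂, 0 ≤ a := fun a ha i => (ha i).le
  have hbox₁ : ∀ x : Fin k → ℝ, {y : Fin k → ℝ | ∀ i, 0 < y i ∧ y i ≤ x i} = P₁ ∩ Iic x := by
    intro x; ext y; simp only [hP₁, mem_setOf_eq, mem_inter_iff, mem_Iic, Pi.le_def, forall_and]
  have hbox₂ : ∀ x : Fin l → ℝ, {y : Fin l → ℝ | ∀ i, 0 < y i ∧ y i ≤ x i} = P₂ ∩ Iic x := by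
    intro x; ext y; simp only [hP₂, mem_setOf_eq, mem_inter_iff, mem_Iic, Pi.le_def, forall_and]
  have hbox : ∀ x : (Fin k → ℝ) × (Fin l → ℝ), {y : (Fin k → ℝ) × (Fin l → ℝ) |
      (∀ i, 0 < y.1 i ∧ y.1 i ≤ x.1 i) ∧ (∀ j, 0 < y.2 j ∧ y.2 j ≤ x.2 j)}
      = P₁ ×ˢ P₂ ∩ Iic x := by
    intro x; ext y
    simp only [hP₁, hP₂, mem_setOf_eq, mem_inter_iff, mem_Iic, Prod.le_def, Pi.le_def,
      forall_and, mem_prod]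
    tauto
  simp only [hbox₁, hbox₂, hbox] at hF hF₁ hF₂ hFcrec hF₁crec hF₂crec
  have hfi : Integrable f := by
    by_contra h
    rw [integral_undef h] at hfint
    exact zero_ne_one hfint
  have hf0 : ∀ y, y ∉ P₁ ×ˢ P₂ → f y = 0 := fun y hy => hfsupp y hy
  have hfn : ∀ y, 0 ≤ f y := by
    intro y
    by_cases hy : y ∈ P₁ ×ˢ P₂
    · exact (hfpos y hy.1 hy.2).le
    · exact (hf0 y hy).ge
  have hfi' : Integrable f ((volume : Measure (Fin k → ℝ)).prod (volume : Measure (Fin l → ℝ))) :=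
    hfi
  have e₁ : f₁ = fun x₁ => ∫ y₂, f (x₁, y₂) := funext hf₁
  have e₂ : f₂ = fun x₂ => ∫ y₁, f (y₁, x₂) := funext hf₂
  have hf₁i : Integrable f₁ := by rw [e₁]; exact hfi'.integral_prod_left
  have hf₂i : Integrable f₂ := by rw [e₂]; exact hfi'.integral_prod_right
  have hf₁n : ∀ y, 0 ≤ f₁ y := fun y => by rw [hf₁]; exact integral_nonneg fun _ => hfn _
  have hf₂n : ∀ y, 0 ≤ f₂ y := fun y => by rw [hf₂]; exact integral_nonneg fun _ => hfn _
  have hf₁0 : ∀ y, y ∉ P₁ → f₁ y = 0 := fun y hy => by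
    rw [hf₁]
    simp [fun z => hf0 (y, z) fun h => hy h.1]
  have hf₂0 : ∀ y, y ∉ P₂ → f₂ y = 0 := fun y hy => by
    rw [hf₂]
    simp [fun z => hf0 (z, y) fun h => hy h.2]
  have I := ident volume f hfn hfi (hm₁.prod hm₂)
    (fun a ha b hb => ⟨hadd₁ _ ha.1 _ hb.1, hadd₂ _ ha.2 _ hb.2⟩)
    (fun a ha b hab => ⟨hup₁ _ ha.1 _ (Prod.le_def.1 hab).1, hup₂ _ ha.2 _ (Prod.le_def.1 hab).2⟩)
    (fun a ha => Prod.le_def.2 ⟨h0₁ _ ha.1, h0₂ _ ha.2⟩) hf0 Fc (by rw [hFc1]; exact hF) hFcrec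
  have I₁ := ident volume f₁ hf₁n hf₁i hm₁ hadd₁ hup₁ h0₁ hf₁0 F₁c
    (by rw [hF₁c1]; exact hF₁) hF₁crec
  have I₂ := ident volume f₂ hf₂n hf₂i hm₂ hadd₂ hup₂ h0₂ hf₂0 F₂c
    (by rw [hF₂c1]; exact hF₂) hF₂crec
  have D := dens_supp volume f hfi hf0
  have D₁ := dens_supp volume f₁ hf₁i hf₁0
  have D₂ := dens_supp volume f₂ hf₂i hf₂0
  have M : IsFiniteMeasure (volume.withDensity fun y => ENNReal.ofReal (f y)) :=
    isFiniteMeasure_withDensity_ofReal hfi.2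
  have M₁ : IsFiniteMeasure (volume.withDensity fun y => ENNReal.ofReal (f₁ y)) :=
    isFiniteMeasure_withDensity_ofReal hf₁i.2
  have M₂ : IsFiniteMeasure (volume.withDensity fun y => ENNReal.ofReal (f₂ y)) :=
    isFiniteMeasure_withDensity_ofReal hf₂i.2
  have hposμ : ∀ x ∈ P₁ ×ˢ P₂, ∀ z ∈ P₁ ×ˢ P₂, z ≤ x →
      (volume.withDensity fun y => ENNReal.ofReal (f y))
        {y | x - y ∈ P₁ ×ˢ P₂ ∧ x - y ≤ z} ≠ 0 := by
    intro x hx z hz hzx h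
    rw [withDensity_apply_eq_zero' hfi.1.aemeasurable.ennreal_ofReal] at h
    have hU : IsOpen {y : (Fin k → ℝ) × (Fin l → ℝ) |
        x - y ∈ P₁ ×ˢ P₂ ∧ y - (x - z) ∈ P₁ ×ˢ P₂} :=
      ((o₁.prod o₂).preimage (continuous_const.sub continuous_id)).inter
        ((o₁.prod o₂).preimage (continuous_id.sub continuous_const))
    refine hU.measure_ne_zero volume ⟨x - (1 / 2 : ℝ) • z, ⟨⟨?_, ?_⟩, ⟨?_, ?_⟩⟩⟩
      (measure_mono_null ?_ h)
    · intro i; have := hz.1 i; simp; linarith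
    · intro i; have := hz.2 i; simp; linarith
    · intro i; have := hz.1 i; simp; linarith
    · intro i; have := hz.2 i; simp; linarith
    · rintro y ⟨hy1, hy2⟩
      refine ⟨?_, hy1, ?_, ?_⟩
      · have : 0 < f y := hfpos y
          (fun i => by
            have h1 : 0 < y.1 i - (x.1 i - z.1 i) := hy2.1 i
            have h2 : z.1 i ≤ x.1 i := hzx.1 i
            linarith)
          (fun i => by
            have h1 : 0 < y.2 i - (x.2 i - z.2 i) := hy2.2 i
            have h2 : z.2 i ≤ x.2 i := hzx.2 i
            linarith)
        simp [this]
      · intro i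
        have h1 : 0 < y.1 i - (x.1 i - z.1 i) := hy2.1 i
        change x.1 i - y.1 i ≤ z.1 i
        linarith
      · intro i
        have h1 : 0 < y.2 i - (x.2 i - z.2 i) := hy2.2 i
        change x.2 i - y.2 i ≤ z.2 i
        linarith
  -- both blocks are nonempty
  have hk : Nonempty (Fin k) := by
    by_contra hk
    rw [not_nonempty_iff] at hk
    have h1 := hr1 1 (fun i => by simp) (fun i => by simp)
    have hP : P₁ = univ := by ext z; simp [hP₁]
    have hI : ∀ z : Fin k → ℝ, Iic z = univ := fun z => by
      ext y; simp only [mem_Iic, mem_univ, iff_true]; exact (Subsingleton.elim y z).le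
    have a1 : F₁ (1 : (Fin k → ℝ) × (Fin l → ℝ)).1 = 1 := by
      rw [hF₁, hP, hI, univ_inter, setIntegral_univ, e₁, ← hfint]
      exact (integral_prod f hfi').symm
    have a2 : F (1 : (Fin k → ℝ) × (Fin l → ℝ)) = F₂ (1 : (Fin k → ℝ) × (Fin l → ℝ)).2 := by
      rw [hF, hF₂, e₂, Iic_prod_eq, prod_inter_prod, hP, hI, univ_inter]
      have := integral_prod_symm (μ := (volume : Measure (Fin k → ℝ)))
        (ν := (volume : Measure (Fin l → ℝ)).restrict
          (P₂ ∩ Iic (1 : (Fin k → ℝ) × (Fin l → ℝ)).2)) f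
        (by
          have h := hfi'.integrableOn (s := univ ×ˢ (P₂ ∩ Iic (1 : (Fin k → ℝ) × (Fin l → ℝ)).2))
          rwa [IntegrableOn, ← Measure.prod_restrict, Measure.restrict_univ] at h)
      rw [← this]
      conv_rhs => rw [← Measure.restrict_univ (μ := (volume : Measure (Fin k → ℝ))),
        Measure.prod_restrict]
      rfl
    rw [a1, a2, one_mul] at h1
    exact absurd h1 (not_lt.2 (div_self_le_one _))
  have hl : Nonempty (Fin l) := by
    by_contra hl
    rw [not_nonempty_iff] at hl
    have h1 := hr1 1 (fun i => by simp) (fun i => by simp)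
    have hP : P₂ = univ := by ext z; simp [hP₂]
    have hI : ∀ z : Fin l → ℝ, Iic z = univ := fun z => by
      ext y; simp only [mem_Iic, mem_univ, iff_true]; exact (Subsingleton.elim y z).le
    have a1 : F₂ (1 : (Fin k → ℝ) × (Fin l → ℝ)).2 = 1 := by
      rw [hF₂, hP, hI, univ_inter, setIntegral_univ, e₂, ← hfint]
      exact (integral_prod_symm f hfi').symm
    have a2 : F (1 : (Fin k → ℝ) × (Fin l → ℝ)) = F₁ (1 : (Fin k → ℝ) × (Fin l → ℝ)).1 := by
      rw [hF, hF₁, e₁, Iic_prod_eq, prod_inter_prod, hP, hI, univ_inter]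
      have := setIntegral_prod f (s := P₁ ∩ Iic (1 : (Fin k → ℝ) × (Fin l → ℝ)).1) (t := univ)
        (hfi'.integrableOn)
      simp only [Measure.restrict_univ] at this
      exact this
    rw [a1, a2, mul_one] at h1
    exact absurd h1 (not_lt.2 (div_self_le_one _))
  intro m hm x b hx1 hx2 hb1 hb2 hxb1 hxb2
  obtain ⟨n, rfl⟩ : ∃ n, m = n + 2 := ⟨m - 2, by omega⟩
  set c := F b / (F₁ b.1 * F₂ b.2) with hc
  have hc0 : 0 ≤ c := (zero_lt_one.trans (hr1 b hb1 hb2)).le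
  have hF₁n : ∀ z, 0 ≤ F₁ z := fun z => by rw [hF₁]; exact integral_nonneg hf₁n
  have hF₂n : ∀ z, 0 ≤ F₂ z := fun z => by rw [hF₂]; exact integral_nonneg hf₂n
  have hFn : ∀ z, 0 ≤ F z := fun z => by rw [hF]; exact integral_nonneg hfn
  have hpp : ∀ z ∈ P₁ ×ˢ P₂, 0 < F₁ z.1 * F₂ z.2 := by
    intro z hz
    refine (mul_nonneg (hF₁n _) (hF₂n _)).lt_of_ne' fun h => ?_
    have := hr1 z hz.1 hz.2
    rw [h, div_zero] at this
    linarith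
  have J : ∀ z, (volume.withDensity fun y => ENNReal.ofReal (f y)) (Iic z)
      = ENNReal.ofReal (F z) := by
    intro z
    have := I 0 z
    rw [zero_add, hFc1] at this
    rw [this, ofReal_measureReal, cpow]
  have J₁ : ∀ z, (volume.withDensity fun y => ENNReal.ofReal (f₁ y)) (Iic z)
      = ENNReal.ofReal (F₁ z) := by
    intro z
    have := I₁ 0 z
    rw [zero_add, hF₁c1] at this
    rw [this, ofReal_measureReal, cpow]
  have J₂ : ∀ z, (volume.withDensity fun y => ENNReal.ofReal (f₂ y)) (Iic z)
      = ENNReal.ofReal (F₂ z) := by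
    intro z
    have := I₂ 0 z
    rw [zero_add, hF₂c1] at this
    rw [this, ofReal_measureReal, cpow]
  have hwk : ∀ z ∈ P₁ ×ˢ P₂, z ≤ b → c * (F₁ z.1 * F₂ z.2) ≤ F z := by
    intro z hz hzb
    rw [← le_div_iff₀ (hpp z hz)]
    exact hrdec z b hz.1 hz.2 hzb.1 hzb.2
  -- strictness near the origin, from strict MTP₂
  have hst : ∀ z ∈ P₁ ×ˢ P₂, z ≤ b → ∃ z₀ ∈ P₁ ×ˢ P₂, z₀ ≤ z ∧
      c * (F₁ z₀.1 * F₂ z₀.2) < F z₀ := by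
    intro z hz hzb
    by_contra! hcon
    have heq : ∀ w ∈ P₁ ×ˢ P₂, w ≤ z → F w = c * (F₁ w.1 * F₂ w.2) := fun w hw hwz =>
      le_antisymm (hcon w hw hwz) (hwk w hw (hwz.trans hzb))
    have hcp : 0 < c := zero_lt_one.trans (hr1 b hb1 hb2)
    obtain ⟨i⟩ := hk
    obtain ⟨j⟩ := hl
    set w : (Fin k → ℝ) × (Fin l → ℝ) := (1 / 2 : ℝ) • z with hw
    have hw1 : ∀ i, w.1 i = z.1 i / 2 := fun i => by simp [hw]; ring
    have hw2 : ∀ i, w.2 i = z.2 i / 2 := fun i => by simp [hw]; ring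
    have hz1 := hz.1
    have hz2 := hz.2
    have key := hMTP2 w (fun i => by rw [hw1]; exact half_pos (hz1 i))
      (fun i => by rw [hw2]; exact half_pos (hz2 i)) (Sum.inl i) (Sum.inr j) (by simp)
    simp only [updCoord, coordVal] at key
    have hev : (fun s => deriv (fun t => Real.log
          (F (Function.update w.1 i t, Function.update w.2 j s))) (w.1 i))
        =ᶠ[nhds (w.2 j)] fun _ => deriv (fun t => Real.log
          (F₁ (Function.update w.1 i t))) (w.1 i) := by
      have hn : Ioo 0 (z.2 j) ∈ nhds (w.2 j) :=
        Ioo_mem_nhds (by rw [hw2]; exact half_pos (hz2 j))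
          (by rw [hw2]; exact half_lt_self (hz2 j))
      filter_upwards [hn] with s hs
      have hn' : Ioo 0 (z.1 i) ∈ nhds (w.1 i) :=
        Ioo_mem_nhds (by rw [hw1]; exact half_pos (hz1 i))
          (by rw [hw1]; exact half_lt_self (hz1 i))
      have he : (fun t => Real.log (F (Function.update w.1 i t, Function.update w.2 j s)))
          =ᶠ[nhds (w.1 i)] fun t => Real.log (F₁ (Function.update w.1 i t)) +
            (Real.log c + Real.log (F₂ (Function.update w.2 j s))) := by
        filter_upwards [hn'] with t ht
        have hq : ((Function.update w.1 i t, Function.update w.2 j s) :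
            (Fin k → ℝ) × (Fin l → ℝ)) ∈ P₁ ×ˢ P₂ := by
          refine ⟨fun a => ?_, fun a => ?_⟩
          · by_cases ha : a = i
            · subst ha; simpa using ht.1
            · simp only [Function.update_of_ne ha, hw1]; exact half_pos (hz1 a)
          · by_cases ha : a = j
            · subst ha; simpa using hs.1
            · simp only [Function.update_of_ne ha, hw2]; exact half_pos (hz2 a)
        have hq' : ((Function.update w.1 i t, Function.update w.2 j s) :
            (Fin k → ℝ) × (Fin l → ℝ)) ≤ z := by
          refine ⟨fun a => ?_, fun a => ?_⟩
          · by_cases ha : a = i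
            · subst ha; simpa using ht.2.le
            · simp only [Function.update_of_ne ha, hw1]; exact half_le_self (hz1 a).le
          · by_cases ha : a = j
            · subst ha; simpa using hs.2.le
            · simp only [Function.update_of_ne ha, hw2]; exact half_le_self (hz2 a).le
        have hp := hpp _ hq
        rw [heq _ hq hq', Real.log_mul hcp.ne' hp.ne',
          Real.log_mul (left_ne_zero_of_mul hp.ne') (right_ne_zero_of_mul hp.ne')]
        ring
      rw [he.deriv_eq, deriv_add_const]
    rw [hev.deriv_eq, deriv_const] at key
    exact lt_irrefl _ key
  have main := core _ _ _ hm₁ hm₂ hadd₁ hup₁ h0₁ hadd₂ hup₂ h0₂ D D₁ D₂ (ENNReal.ofReal c)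
    ENNReal.ofReal_ne_top b ?_ hposμ ?_ n x ⟨hx1, hx2⟩ ⟨hxb1, hxb2⟩
  · rw [I (n + 1), I₁ (n + 1), I₂ (n + 1), gt_iff_lt]
    have := ENNReal.toReal_strict_mono (measure_ne_top _ _) main
    simpa [ENNReal.toReal_mul, ENNReal.toReal_pow, ENNReal.toReal_ofReal hc0, measureReal_def]
      using this
  · intro z hz hzb
    rw [J, J₁, J₂, ← ENNReal.ofReal_mul (hF₁n _), ← ENNReal.ofReal_mul hc0]
    exact ENNReal.ofReal_le_ofReal (hwk z hz hzb)
  · intro z hz hzb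
    obtain ⟨z₀, hz₀, hz₀z, hlt⟩ := hst z hz hzb
    refine ⟨z₀, hz₀, hz₀z, fun y hy hyz => ?_⟩
    rw [J, J₁, J₂, ← ENNReal.ofReal_mul (hF₁n _), ← ENNReal.ofReal_mul hc0]
    have hlt' : c * (F₁ y.1 * F₂ y.2) < F y := by
      rw [← lt_div_iff₀ (hpp _ hy)]
      rw [← lt_div_iff₀ (hpp _ hz₀)] at hlt
      exact hlt.trans_le (hrdec y z₀ hy.1 hy.2 hyz.1 hyz.2)
    exact (ENNReal.ofReal_lt_ofReal_iff_of_nonneg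
      (mul_nonneg hc0 (mul_nonneg (hF₁n _) (hF₂n _)))).2 hlt'
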